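/- For every unconstrained coefficient vector β ∈ ℝ^D, the transformation H equals the identity outside the compact set [a, b]; that is, H(x) = x for all x ∈ (−∞, a] ∪ [b, ∞). -/

import Mathlib

open MeasureTheory Finset

noncomputable section

/-- The cardinal cubic B-spline. -/
def cubicN (t : ℝ) : ℝ :=
  if 0 ≤ t ∧ t < 1 then t ^ 3 / 6
  else if 1 ≤ t ∧ t < 2 then (-3 * t ^ 3 + 12 * t ^ 2 - 12 * t + 4) / 6
  else if 2 ≤ t ∧ t < 3 then (3 * t ^ 3 - 24 * t ^ 2 + 60 * t - 44) / 6
  else if 3 ≤ t ∧ t ≤ 4 then (4 - t) ^ 3 / 6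
  else 0

/-- Equidistant knots `k_j = k0 + j·k`. -/
def knot (k0 k : ℝ) (j : ℤ) : ℝ := k0 + (j : ℝ) * k

/-- Cubic B-spline basis functions `B_j(x) = N((x − k_{j−3})/k)` for `j = 1, …, J`. -/
def Bspl (k0 k : ℝ) (j : ℕ) (x : ℝ) : ℝ := cubicN ((x - knot k0 k ((j : ℤ) - 3)) / k)

/-- The coefficients `γ_1, …, γ_J` (with `J = D + 7`, `m = D + 5`), defined from the
unconstrained vector `β ∈ ℝ^D`. -/
def gam (D : ℕ) (k0 k : ℝ) (β : Fin D → ℝ) (j : ℕ) : ℝ :=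
  if j = 1 then k0
  else if j = 2 ∨ j = 3 ∨ j = 4 ∨ j = D + 5 ∨ j = D + 6 ∨ j = D + 7 then Real.log k
  else if h : 5 ≤ j ∧ j ≤ D + 4 then
    β ⟨j - 5, by omega⟩ - Real.log ((∑ d, Real.exp (β d)) / ((D : ℝ) * k))
  else 0

/-- The transformation `H`: a cubic B-spline with coefficients
`γ_1 + ∑_{ℓ=2}^j exp(γ_ℓ)` on `[k_1, k_m]` (with `m = D + 5`), and the identity outside. -/
def Hfun (D : ℕ) (k0 k : ℝ) (β : Fin D → ℝ) (x : ℝ) : ℝ :=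
  if knot k0 k 1 ≤ x ∧ x ≤ knot k0 k ((D : ℤ) + 5) then
    ∑ j ∈ Finset.Icc 1 (D + 7),
      Bspl k0 k j x * (gam D k0 k β 1 + ∑ l ∈ Finset.Icc 2 j, Real.exp (gam D k0 k β l))
  else x

/-!
On a knot interval `[k_n, k_{n+1}]` only the four basis functions `B_n, …, B_{n+3}` are nonzero, and
cubic B-splines reproduce linear functions: the spline is the identity there as soon as its
coefficients are `c_j = k_{j-1}` for `n ≤ j ≤ n + 3`. The coefficients of `H` start at `c_1 = k_0`
and have increments `k` at both ends, while the softmax-type normalization of `β` makes the middle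
increments add up to `D * k`. Hence `c_j = k_{j-1}` for the first four and the last four indices,
and `H` is the identity on `[k_1, k_2]` and on `[k_{D+4}, k_{D+5}]`.
-/

section CardinalSpline

variable {t u : ℝ}

theorem cubicN_of_nonpos (ht : t ≤ 0) : cubicN t = 0 := by
  grind [cubicN]

theorem cubicN_of_four_le (ht : 4 ≤ t) : cubicN t = 0 := by
  rcases ht.eq_or_lt with rfl | ht
  · norm_num [cubicN]
  · grind [cubicN]

theorem cubicN_of_mem_Icc_zero_one (ht : t ∈ Set.Icc 0 1) : cubicN t = t ^ 3 / 6 := by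
  grind [cubicN]

theorem cubicN_of_mem_Icc_one_two (ht : t ∈ Set.Icc 1 2) :
    cubicN t = (-3 * t ^ 3 + 12 * t ^ 2 - 12 * t + 4) / 6 := by
  grind [cubicN]

theorem cubicN_of_mem_Icc_two_three (ht : t ∈ Set.Icc 2 3) :
    cubicN t = (3 * t ^ 3 - 24 * t ^ 2 + 60 * t - 44) / 6 := by
  grind [cubicN]

theorem cubicN_of_mem_Icc_three_four (ht : t ∈ Set.Icc 3 4) : cubicN t = (4 - t) ^ 3 / 6 := by
  grind [cubicN]

theorem sum_cubicN_mul_affine (hu : u ∈ Set.Icc 0 1) (p q : ℝ) :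
    ∑ i ∈ range 4, cubicN (u + 3 - i) * (p + i * q) = p + (u + 1) * q := by
  obtain ⟨hu0, hu1⟩ := hu
  have h0 := cubicN_of_mem_Icc_three_four (t := u + 3) ⟨by linarith, by linarith⟩
  have h1 := cubicN_of_mem_Icc_two_three (t := u + 2) ⟨by linarith, by linarith⟩
  have h2 := cubicN_of_mem_Icc_one_two (t := u + 1) ⟨by linarith, by linarith⟩
  have h3 := cubicN_of_mem_Icc_zero_one (t := u) ⟨hu0, hu1⟩
  have shift1 : u + 3 - 1 = u + 2 := by ring
  have shift2 : u + 3 - 2 = u + 1 := by ring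
  simp only [sum_range_succ, sum_range_zero, Nat.cast_ofNat, Nat.cast_zero, Nat.cast_one,
    sub_zero, add_sub_cancel_right, shift1, shift2, h0, h1, h2, h3]
  ring

end CardinalSpline

section SplineBasis

variable {k0 k x : ℝ}

theorem knot_mono (hk : 0 ≤ k) : Monotone (knot k0 k) := fun i j hij => by
  unfold knot
  gcongr

theorem Bspl_eq_zero_of_le_knot {j : ℕ} (hk : 0 ≤ k) (hx : x ≤ knot k0 k (j - 3)) :
    Bspl k0 k j x = 0 :=
  cubicN_of_nonpos (div_nonpos_of_nonpos_of_nonneg (sub_nonpos.2 hx) hk)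

theorem Bspl_eq_zero_of_knot_le {j : ℕ} (hk : 0 < k) (hx : knot k0 k (j + 1) ≤ x) :
    Bspl k0 k j x = 0 := by
  refine cubicN_of_four_le ((le_div_iff₀ hk).2 ?_)
  simp only [knot] at hx ⊢
  push_cast at hx ⊢
  linarith

theorem Bspl_eq_zero_of_mem_knot_interval {n j : ℕ} (hk : 0 < k)
    (hx : x ∈ Set.Icc (knot k0 k n) (knot k0 k (n + 1))) (hj : j ∉ Ico n (n + 4)) :
    Bspl k0 k j x = 0 := by
  rw [mem_Ico, not_and_or, not_le, not_lt] at hj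
  rcases hj with hjn | hnj
  · exact Bspl_eq_zero_of_knot_le hk ((knot_mono hk.le (by omega)).trans hx.1)
  · exact Bspl_eq_zero_of_le_knot hk.le (hx.2.trans (knot_mono hk.le (by omega)))

theorem Bspl_add_eq_cubicN (hk : k ≠ 0) (n i : ℕ) :
    Bspl k0 k (n + i) x = cubicN ((x - knot k0 k n) / k + 3 - i) := by
  unfold Bspl knot
  congr 1
  push_cast
  field_simp
  ring

theorem sum_Bspl_mul_eq_self {n : ℕ} {s : Finset ℕ} {c : ℕ → ℝ} (hk : 0 < k)
    (hx : x ∈ Set.Icc (knot k0 k n) (knot k0 k (n + 1))) (hs : Ico n (n + 4) ⊆ s)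
    (hc : ∀ j ∈ Ico n (n + 4), c j = knot k0 k (j - 1)) :
    ∑ j ∈ s, Bspl k0 k j x * c j = x := by
  set u := (x - knot k0 k n) / k with hu_def
  have hu : u ∈ Set.Icc 0 1 := by
    refine ⟨div_nonneg (sub_nonneg.2 hx.1) hk.le, (div_le_one hk).2 ?_⟩
    have hx1 := hx.2
    simp only [knot] at hx1 ⊢
    push_cast at hx1 ⊢
    linarith
  calc ∑ j ∈ s, Bspl k0 k j x * c j
      = ∑ j ∈ Ico n (n + 4), Bspl k0 k j x * c j :=
        (sum_subset hs fun j _ hj => by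
          rw [Bspl_eq_zero_of_mem_knot_interval hk hx hj, zero_mul]).symm
    _ = ∑ i ∈ range 4, Bspl k0 k (n + i) x * c (n + i) := by
        rw [sum_Ico_eq_sum_range, Nat.add_sub_cancel_left]
    _ = ∑ i ∈ range 4, cubicN (u + 3 - i) * (knot k0 k (n - 1) + i * k) := by
        refine sum_congr rfl fun i hi => ?_
        rw [mem_range] at hi
        rw [Bspl_add_eq_cubicN hk.ne', ← hu_def, hc (n + i) (mem_Ico.2 ⟨by omega, by omega⟩)]
        simp only [knot]
        push_cast
        ring
    _ = knot k0 k (n - 1) + (u + 1) * k := sum_cubicN_mul_affine hu _ _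
    _ = x := by
        simp only [hu_def, knot]
        push_cast
        field_simp
        ring

end SplineBasis

theorem sum_exp_sub_log_sum_exp_div {ι : Type*} [Fintype ι] [Nonempty ι] (β : ι → ℝ) {c : ℝ}
    (hc : 0 < c) : ∑ i, Real.exp (β i - Real.log ((∑ d, Real.exp (β d)) / c)) = c := by
  have hsum : 0 < ∑ d, Real.exp (β d) := sum_pos (fun d _ => Real.exp_pos _) univ_nonempty
  simp only [Real.exp_sub, Real.exp_log (div_pos hsum hc)]
  rw [← sum_div, div_div_cancel₀ hsum.ne']

section Coefficients

variable {D : ℕ} {k0 k : ℝ} {β : Fin D → ℝ}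

theorem exp_gam_of_mem_Ioc_one_four (hk : 0 < k) {l : ℕ} (hl : l ∈ Ioc 1 4) :
    Real.exp (gam D k0 k β l) = k := by
  rw [mem_Ioc] at hl
  rw [gam, if_neg (by omega), if_pos (by omega), Real.exp_log hk]

theorem exp_gam_of_mem_Ioc_last (hk : 0 < k) {l : ℕ} (hl : l ∈ Ioc (D + 4) (D + 7)) :
    Real.exp (gam D k0 k β l) = k := by
  rw [mem_Ioc] at hl
  rw [gam, if_neg (by omega), if_pos (by omega), Real.exp_log hk]

theorem gam_five_add (i : Fin D) :
    gam D k0 k β (5 + i) = β i - Real.log ((∑ d, Real.exp (β d)) / (D * k)) := by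
  have hi := i.isLt
  rw [gam, if_neg (by omega), if_neg (by omega), dif_pos (by omega)]
  simp only [Nat.add_sub_cancel_left]

theorem sum_exp_gam_middle (hD : 1 ≤ D) (hk : 0 < k) :
    ∑ l ∈ Ioc 4 (D + 4), Real.exp (gam D k0 k β l) = D * k := by
  have : Nonempty (Fin D) := ⟨⟨0, hD⟩⟩
  have hDk : 0 < D * k := mul_pos (Nat.cast_pos.2 hD) hk
  have hIoc : Ioc 4 (D + 4) = Ico 5 (D + 5) := by
    ext l
    simp only [mem_Ioc, mem_Ico]
    omega
  rw [hIoc, sum_Ico_eq_sum_range, Nat.add_sub_cancel, sum_range]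
  simp only [gam_five_add]
  exact sum_exp_sub_log_sum_exp_div β hDk

/-- The coefficient `γ_1 + ∑_{ℓ=2}^j exp γ_ℓ` of `B_j` in the spline `H`. -/
def splineCoeff (D : ℕ) (k0 k : ℝ) (β : Fin D → ℝ) (j : ℕ) : ℝ :=
  gam D k0 k β 1 + ∑ l ∈ Icc 2 j, Real.exp (gam D k0 k β l)

theorem splineCoeff_one : splineCoeff D k0 k β 1 = knot k0 k 0 := by
  simp [splineCoeff, gam, knot]

theorem splineCoeff_eq_add_sum {i j : ℕ} (hi : 1 ≤ i) (hij : i ≤ j) :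
    splineCoeff D k0 k β j =
      splineCoeff D k0 k β i + ∑ l ∈ Ioc i j, Real.exp (gam D k0 k β l) := by
  have hIcc (n : ℕ) : Icc 2 n = Ioc 1 n := rfl
  rw [splineCoeff, splineCoeff, hIcc, hIcc, add_assoc, sum_Ioc_consecutive _ hi hij]

theorem splineCoeff_eq_knot_of_exp_gam_eq {i j : ℕ} (hi : 1 ≤ i) (hij : i ≤ j)
    (hci : splineCoeff D k0 k β i = knot k0 k (i - 1))
    (hgam : ∀ l ∈ Ioc i j, Real.exp (gam D k0 k β l) = k) :
    splineCoeff D k0 k β j = knot k0 k (j - 1) := by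
  rw [splineCoeff_eq_add_sum hi hij, hci, sum_congr rfl hgam, sum_const, Nat.card_Ioc,
    nsmul_eq_mul, Nat.cast_sub hij]
  simp only [knot]
  push_cast
  ring

theorem splineCoeff_eq_knot_of_le_four (hk : 0 < k) {j : ℕ} (hj1 : 1 ≤ j) (hj4 : j ≤ 4) :
    splineCoeff D k0 k β j = knot k0 k (j - 1) :=
  splineCoeff_eq_knot_of_exp_gam_eq le_rfl hj1 splineCoeff_one fun _ hl =>
    exp_gam_of_mem_Ioc_one_four hk (Ioc_subset_Ioc_right hj4 hl)

theorem splineCoeff_add_four (hD : 1 ≤ D) (hk : 0 < k) :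
    splineCoeff D k0 k β (D + 4) = knot k0 k (D + 3) := by
  rw [splineCoeff_eq_add_sum (i := 4) (by omega) (by omega), sum_exp_gam_middle hD hk,
    splineCoeff_eq_knot_of_le_four hk (by omega) le_rfl]
  simp only [knot]
  push_cast
  ring

theorem splineCoeff_eq_knot_of_add_four_le (hD : 1 ≤ D) (hk : 0 < k) {j : ℕ}
    (hj4 : D + 4 ≤ j) (hj7 : j ≤ D + 7) :
    splineCoeff D k0 k β j = knot k0 k (j - 1) := by
  refine splineCoeff_eq_knot_of_exp_gam_eq (by omega) hj4 ?_ fun _ hl =>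
    exp_gam_of_mem_Ioc_last hk (Ioc_subset_Ioc_right hj7 hl)
  rw [splineCoeff_add_four hD hk]
  congr 1
  push_cast
  ring

end Coefficients

section Transformation

variable {D : ℕ} {k0 k x : ℝ} {β : Fin D → ℝ}

theorem Hfun_of_mem (hx : x ∈ Set.Icc (knot k0 k 1) (knot k0 k (D + 5))) :
    Hfun D k0 k β x = ∑ j ∈ Icc 1 (D + 7), Bspl k0 k j x * splineCoeff D k0 k β j :=
  if_pos hx

theorem Hfun_of_notMem (hx : x ∉ Set.Icc (knot k0 k 1) (knot k0 k (D + 5))) :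
    Hfun D k0 k β x = x :=
  if_neg hx

theorem Hfun_eq_self_of_mem_knot_interval {n : ℕ} (hk : 0 < k) (hn1 : 1 ≤ n) (hnD : n ≤ D + 4)
    (hx : x ∈ Set.Icc (knot k0 k n) (knot k0 k (n + 1)))
    (hc : ∀ j ∈ Ico n (n + 4), splineCoeff D k0 k β j = knot k0 k (j - 1)) :
    Hfun D k0 k β x = x := by
  have hsupp : Ico n (n + 4) ⊆ Icc 1 (D + 7) := fun j hj => by
    rw [mem_Ico] at hj
    exact mem_Icc.2 ⟨by omega, by omega⟩
  have hxH : x ∈ Set.Icc (knot k0 k 1) (knot k0 k (D + 5)) :=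
    ⟨(knot_mono hk.le (by omega)).trans hx.1, hx.2.trans (knot_mono hk.le (by omega))⟩
  rw [Hfun_of_mem hxH]
  exact sum_Bspl_mul_eq_self hk hx hsupp hc

end Transformation

/-- For every `β ∈ ℝ^D`, the transformation `H` equals the identity outside
the compact set `[a, b]`: `H(x) = x` for all `x ∈ (−∞, a] ∪ [b, ∞)`, where `a = k_2` and
`b = k_{m−1}` with `m = D + 5`. -/
theorem H_identity_outside (D : ℕ) (hD : 1 ≤ D) (k0 k : ℝ) (hk : 0 < k)
    (β : Fin D → ℝ) (x : ℝ)
    (hx : x ≤ knot k0 k 2 ∨ knot k0 k ((D : ℤ) + 4) ≤ x) :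
    Hfun D k0 k β x = x := by
  by_cases hxH : x ∈ Set.Icc (knot k0 k 1) (knot k0 k (D + 5))
  · rcases hx with hxa | hbx
    · refine Hfun_eq_self_of_mem_knot_interval (n := 1) hk le_rfl (by omega) ⟨hxH.1, hxa⟩ ?_
      intro j hj
      rw [mem_Ico] at hj
      exact splineCoeff_eq_knot_of_le_four hk (by omega) (by omega)
    · refine Hfun_eq_self_of_mem_knot_interval (n := D + 4) hk (by omega) le_rfl ⟨?_, ?_⟩ ?_
      · exact_mod_cast hbx
      · exact_mod_cast hxH.2
      intro j hj
      rw [mem_Ico] at hj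
      exact splineCoeff_eq_knot_of_add_four_le hD hk (by omega) (by omega)
  · exact Hfun_of_notMem hxH

end
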